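/- Let d ≥ 2 and let ψ = Σ_{i} a_i |ii⟩ be a unit vector in ℂ^d ⊗ ℂ^d with ordered coefficients a_1 ≥ a_2 ≥ … ≥ a_d ≥ 0 and Σ_i a_i² = 1. Then: (a) the matrix ψψ† + a_1 a_2 · 𝟙 is separable; and (b) for every t ≥ 0, if ψψ† + t·𝟙 is separable then t ≥ a_1 a_2. Hence the random robustness of ψ equals a_1 a_2. -/

import Mathlib

open Matrix BigOperators Kronecker ComplexOrder

/-- The d×d matrix `M_v` associated with a vector `v` on ℂ^d ⊗ ℂ^d, `(M_v)_{ij} = v (i,j)`. -/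
def toMat (d : ℕ) (v : Fin d × Fin d → ℂ) : Matrix (Fin d) (Fin d) ℂ :=
  Matrix.of fun i j => v (i, j)

/-- `ρ` has Schmidt number at most `n`: it is a finite sum of `w wᴴ` with each `w` of
Schmidt rank (i.e. rank of the associated d×d matrix) at most `n`. -/
def SchmidtNumberLE (d : ℕ) (ρ : Matrix (Fin d × Fin d) (Fin d × Fin d) ℂ) (n : ℕ) : Prop :=
  ∃ (k : ℕ) (w : Fin k → (Fin d × Fin d → ℂ)),
    (∀ i, (toMat d (w i)).rank ≤ n) ∧
    ρ = ∑ i, Matrix.vecMulVec (w i) (star (w i))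

/-- The vector `Σ_i a_i |ii⟩`. -/
noncomputable def ketDiag (d : ℕ) (a : Fin d → ℝ) : Fin d × Fin d → ℂ :=
  fun p => if p.1 = p.2 then ((a p.1 : ℝ) : ℂ) else 0

/-!
A separable matrix has a positive partial transpose, and for `ψψᴴ + t𝟙` the `2 × 2` minor of the
partial transpose on `|ij⟩, |ji⟩` with `i ≠ j` is `t² - (a_i a_j)²`, so separability forces
`|a_i a_j| ≤ t`.

Conversely, choose `ζ_i ∈ ℂ` with `ζ_i² = a_i` and average the projectors onto the product vectors
`(∑_i ζ_i ω_i |i⟩) ⊗ (∑_j ζ_j ω̄_j |j⟩)` over independent uniform phases `ω_i`. The average of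
`ω_i ω̄_j ω̄_k ω_l` vanishes unless `{i, l} = {j, k}` as multisets, and cube roots of unity already
suffice for this, because the exponents involved lie in `[-2, 2]`. What survives is
`ψψᴴ + ∑_{i ≠ j} |a_i a_j| |ij⟩⟨ij|`, which a nonnegative diagonal matrix completes to `ψψᴴ + t𝟙`
as soon as `t` bounds all the `|a_i a_j|`.
-/

section RankOneMinors

variable {m n p K : Type*} [Fintype n] [Field K]

lemma det_submatrix_eq_zero_of_rank_lt [Fintype p] [DecidableEq p] {A : Matrix m n K}
    (hA : A.rank < Fintype.card p) (r : p → m) (c : p → n) : (A.submatrix r c).det = 0 := by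
  by_contra hdet
  have hrank : (A.submatrix r c).rank = Fintype.card p :=
    rank_of_isUnit _ ((isUnit_iff_isUnit_det _).2 (isUnit_iff_ne_zero.2 hdet))
  exact (hrank ▸ rank_submatrix_le A r c).not_gt hA

lemma mul_apply_eq_of_rank_le_one {A : Matrix m n K} (hA : A.rank ≤ 1) (i j : m) (k l : n) :
    A i k * A j l = A i l * A j k := by
  have hminor := det_submatrix_eq_zero_of_rank_lt (p := Fin 2)
    (by rw [Fintype.card_fin]; omega : A.rank < Fintype.card (Fin 2)) ![i, j] ![k, l]
  simpa only [det_fin_two, submatrix_apply, cons_val_zero, cons_val_one, sub_eq_zero] using hminor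

end RankOneMinors

namespace SchmidtNumberLE

variable {d n : ℕ} {ρ σ : Matrix (Fin d × Fin d) (Fin d × Fin d) ℂ}

lemma zero : SchmidtNumberLE d 0 n := ⟨0, Fin.elim0, fun i => i.elim0, by simp⟩

lemma vecMulVec_self_star {v : Fin d × Fin d → ℂ} (hv : (toMat d v).rank ≤ n) :
    SchmidtNumberLE d (vecMulVec v (star v)) n :=
  ⟨1, fun _ => v, fun _ => hv, by simp⟩

lemma add (hρ : SchmidtNumberLE d ρ n) (hσ : SchmidtNumberLE d σ n) :
    SchmidtNumberLE d (ρ + σ) n := by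
  obtain ⟨k, v, hv, rfl⟩ := hρ
  obtain ⟨l, w, hw, rfl⟩ := hσ
  refine ⟨k + l, Fin.append v w, fun i => ?_, ?_⟩
  · induction i using Fin.addCases with
    | left i => simpa only [Fin.append_left] using hv i
    | right i => simpa only [Fin.append_right] using hw i
  · simp only [Fin.sum_univ_add, Fin.append_left, Fin.append_right]

lemma sum {ι : Type*} {s : Finset ι} {τ : ι → Matrix (Fin d × Fin d) (Fin d × Fin d) ℂ}
    (hτ : ∀ x ∈ s, SchmidtNumberLE d (τ x) n) : SchmidtNumberLE d (∑ x ∈ s, τ x) n :=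
  Finset.sum_induction τ (SchmidtNumberLE d · n) (fun _ _ => add) zero hτ

lemma smul {c : ℝ} (hc : 0 ≤ c) (hρ : SchmidtNumberLE d ρ n) : SchmidtNumberLE d (c • ρ) n := by
  obtain ⟨k, w, hw, rfl⟩ := hρ
  refine ⟨k, fun i => √c • w i, fun i => ?_, ?_⟩
  · have hmul : toMat d (√c • w i) = (√c • (1 : Matrix (Fin d) (Fin d) ℂ)) * toMat d (w i) := by
      rw [smul_mul_assoc, one_mul]; rfl
    exact hmul ▸ (rank_mul_le_right _ _).trans (hw i)
  · simp only [star_smul, star_trivial, smul_vecMulVec, vecMulVec_smul, smul_smul,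
      Real.mul_self_sqrt hc, Finset.smul_sum]

/-- Every separable matrix has a positive partial transpose; the inequality is the nonnegativity of
the 2 × 2 principal minors of that partial transpose. -/
lemma norm_sq_apply_le (hρ : SchmidtNumberLE d ρ 1) (i j k l : Fin d) :
    ‖ρ (i, k) (j, l)‖ ^ 2 ≤ (ρ (i, l) (i, l)).re * (ρ (j, k) (j, k)).re := by
  obtain ⟨N, w, hw, rfl⟩ := hρ
  have hdiag (p : Fin d × Fin d) :
      ((∑ t, vecMulVec (w t) (star (w t))) p p).re = ∑ t, ‖w t p‖ ^ 2 := by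
    simp only [Matrix.sum_apply, vecMulVec_apply, Pi.star_apply, Complex.re_sum, RCLike.star_def,
      Complex.mul_conj, Complex.ofReal_re, Complex.normSq_eq_norm_sq]
  have hminor (t : Fin N) : ‖w t (i, k)‖ * ‖w t (j, l)‖ = ‖w t (i, l)‖ * ‖w t (j, k)‖ := by
    simpa only [toMat, of_apply, norm_mul] using
      congrArg norm (mul_apply_eq_of_rank_le_one (hw t) i j k l)
  have hoff : ‖(∑ t, vecMulVec (w t) (star (w t))) (i, k) (j, l)‖ ≤
      ∑ t, ‖w t (i, l)‖ * ‖w t (j, k)‖ := by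
    simpa only [Matrix.sum_apply, vecMulVec_apply, Pi.star_apply, norm_mul, norm_star, hminor] using
      norm_sum_le Finset.univ fun t => w t (i, k) * star (w t (j, l))
  rw [hdiag, hdiag]
  exact (pow_le_pow_left₀ (norm_nonneg _) hoff 2).trans
    (Finset.sum_mul_sq_le_sq_mul_sq _ _ _)

end SchmidtNumberLE

/-- The product vector `u ⊗ v`. -/
def productVec {ι : Type*} (u v : ι → ℂ) : ι × ι → ℂ := fun p => u p.1 * v p.2

lemma productVec_single {ι : Type*} [DecidableEq ι] (p : ι × ι) :
    productVec (Pi.single p.1 1) (Pi.single p.2 1) = Pi.single p 1 := by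
  ext ⟨i, j⟩
  simp only [productVec, Pi.single_apply, Prod.ext_iff, ite_and, ite_mul, one_mul, zero_mul]

namespace SchmidtNumberLE

variable {d : ℕ}

lemma vecMulVec_productVec (u v : Fin d → ℂ) :
    SchmidtNumberLE d (vecMulVec (productVec u v) (star (productVec u v))) 1 :=
  vecMulVec_self_star (rank_vecMulVec_le u v)

lemma diagonal_ofReal {c : Fin d × Fin d → ℝ} (hc : ∀ p, 0 ≤ c p) :
    SchmidtNumberLE d (diagonal fun p => (c p : ℂ)) 1 := by
  have hsingle (p : Fin d × Fin d) : Matrix.single p p (c p : ℂ) =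
      c p • vecMulVec (Pi.single p 1) (star (Pi.single p 1)) := by
    rw [Pi.star_single, star_one, ← single_eq_single_vecMulVec_single, smul_single,
      Complex.real_smul, mul_one]
  rw [← sum_single_eq_diagonal]
  refine sum fun p _ => hsingle p ▸ smul (hc p) ?_
  exact productVec_single p ▸ vecMulVec_productVec _ _

end SchmidtNumberLE

section PhaseAveraging

variable {ι : Type*}

lemma forall_add_eq_add_iff_sym2_eq {R : Type*} [AddCommGroupWithOne R] [NeZero (2 : R)]
    {i j k l : ι} : (∀ x : ι → R, x i + x l = x j + x k) ↔ s(i, l) = s(j, k) := by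
  classical
  have htwo : (1 : R) + 1 ≠ 0 := one_add_one_eq_two (R := R) ▸ two_ne_zero
  have hone : (1 : R) ≠ 0 := fun h => htwo (by rw [h, add_zero])
  have separates {p q : ι} (h : ∀ x : ι → R, x p = x q) : p = q := by
    by_contra hpq
    simpa [Ne.symm hpq, hone] using h (Pi.single p 1)
  rw [Sym2.eq_iff]
  constructor
  · intro h
    have hi : i = j ∨ i = k := by
      by_contra! hne
      have hsum := h (Pi.single i 1)
      by_cases hl : l = i <;> simp [hne.1.symm, hne.2.symm, hl, htwo, hone] at hsum
    rcases hi with rfl | rfl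
    · exact .inl ⟨rfl, separates fun x => add_left_cancel (h x)⟩
    · exact .inr ⟨rfl, separates fun x => add_left_cancel ((h x).trans (add_comm _ _))⟩
  · rintro (⟨rfl, rfl⟩ | ⟨rfl, rfl⟩) x
    · rfl
    · exact add_comm _ _

variable {N : ℕ} [NeZero N]

lemma sum_stdAddChar_add_sub_add [Fintype ι] [DecidableEq ι] [NeZero (2 : ZMod N)]
    (i j k l : ι) :
    ∑ x : ι → ZMod N, ZMod.stdAddChar (x i + x l - (x j + x k)) =
      if s(i, l) = s(j, k) then (Fintype.card (ι → ZMod N) : ℂ) else 0 := by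
  classical
  let f : (ι → ZMod N) →+ ZMod N :=
    let eval := Pi.evalAddMonoidHom fun _ : ι => ZMod N
    eval i + eval l - (eval j + eval k)
  have hf : ZMod.stdAddChar.compAddMonoidHom f = 0 ↔ s(i, l) = s(j, k) := by
    simp only [← forall_add_eq_add_iff_sym2_eq (R := ZMod N), DFunLike.ext_iff,
      AddChar.compAddMonoidHom_apply, AddChar.zero_apply,
      ← AddChar.map_zero_eq_one (ZMod.stdAddChar (N := N)), ZMod.injective_stdAddChar.eq_iff]
    exact forall_congr' fun x => sub_eq_zero
  exact (AddChar.sum_eq_ite (ZMod.stdAddChar.compAddMonoidHom f)).trans (by simp only [hf])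

/-- The product vector `ζ_i χ(x_i) ⊗ ζ_j χ(-x_j)`, where `χ` is the standard character of `ZMod N`
and `x` is a choice of phases. Conjugating the phase of the second factor makes the diagonal
coefficients `ζ_i²` independent of `x`. -/
noncomputable def phasedProductVec (ζ : ι → ℂ) (x : ι → ZMod N) : ι × ι → ℂ :=
  productVec (fun i => ζ i * ZMod.stdAddChar (x i)) (fun j => ζ j * ZMod.stdAddChar (-x j))

lemma phasedProductVec_mul_star (ζ : ι → ℂ) (x : ι → ZMod N) (i j k l : ι) :
    phasedProductVec ζ x (i, j) * star (phasedProductVec ζ x (k, l)) =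
      ζ i * ζ j * star (ζ k * ζ l) * ZMod.stdAddChar (x i + x l - (x j + x k)) := by
  simp only [phasedProductVec, productVec, star_mul', RCLike.star_def, ← AddChar.map_neg_eq_conj,
    neg_neg, sub_eq_add_neg, neg_add, AddChar.map_add_eq_mul]
  ring

/-- The average of the rank-one matrices `v vᴴ` of the vectors `v = phasedProductVec ζ x` over all
choices of phases `x`. -/
noncomputable def phaseAverage (N : ℕ) [NeZero N] [Fintype ι] [DecidableEq ι] (ζ : ι → ℂ) :
    Matrix (ι × ι) (ι × ι) ℂ :=
  (Fintype.card (ι → ZMod N) : ℝ)⁻¹ •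
    ∑ x : ι → ZMod N, vecMulVec (phasedProductVec ζ x) (star (phasedProductVec ζ x))

lemma schmidtNumberLE_phaseAverage {d : ℕ} (N : ℕ) [NeZero N] (ζ : Fin d → ℂ) :
    SchmidtNumberLE d (phaseAverage N ζ) 1 :=
  .smul (by positivity) (.sum fun _ _ => .vecMulVec_productVec _ _)

lemma phaseAverage_apply [Fintype ι] [DecidableEq ι] [NeZero (2 : ZMod N)]
    (ζ : ι → ℂ) (i j k l : ι) :
    phaseAverage N ζ (i, j) (k, l) =
      if s(i, l) = s(j, k) then ζ i * ζ j * star (ζ k * ζ l) else 0 := by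
  have hcard : (Fintype.card (ι → ZMod N) : ℂ) ≠ 0 := Nat.cast_ne_zero.2 Fintype.card_ne_zero
  simp only [phaseAverage, Matrix.smul_apply, Matrix.sum_apply, vecMulVec_apply, Pi.star_apply,
    phasedProductVec_mul_star, ← Finset.mul_sum, sum_stdAddChar_add_sub_add, Complex.real_smul,
    Complex.ofReal_inv, Complex.ofReal_natCast, mul_ite, mul_zero]
  congr 1
  field_simp

end PhaseAveraging

section DiagonalVectors

variable {d : ℕ}

/-- The weights of the diagonal noise `∑_{i ≠ j} |a_i a_j| |ij⟩⟨ij|` that phase averaging adds to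
the projector onto `∑_i a_i |ii⟩`. -/
def offDiagWeight {ι : Type*} [DecidableEq ι] (a : ι → ℝ) (p : ι × ι) : ℝ :=
  if p.1 = p.2 then 0 else |a p.1 * a p.2|

lemma phaseAverage_eq_vecMulVec_ketDiag_add_diagonal {N : ℕ} [NeZero N] [NeZero (2 : ZMod N)]
    {a : Fin d → ℝ} {ζ : Fin d → ℂ} (hζ : ∀ i, ζ i ^ 2 = a i) :
    phaseAverage N ζ = vecMulVec (ketDiag d a) (star (ketDiag d a)) +
      diagonal fun p => (offDiagWeight a p : ℂ) := by
  have hketDiag (i k : Fin d) : ζ i * ζ i * star (ζ k * ζ k) = a i * a k := by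
    rw [← pow_two, ← pow_two, hζ, hζ, RCLike.star_def, Complex.conj_ofReal]
  have hweight (i j : Fin d) : ζ i * ζ j * star (ζ i * ζ j) = (|a i * a j| : ℝ) := by
    rw [RCLike.star_def, Complex.mul_conj', ← Complex.ofReal_pow, ← norm_pow, mul_pow, hζ, hζ,
      ← Complex.ofReal_mul, Complex.norm_real, Real.norm_eq_abs]
  ext ⟨i, j⟩ ⟨k, l⟩
  simp only [phaseAverage_apply, Sym2.eq_iff, Matrix.add_apply, vecMulVec_apply, Pi.star_apply,
    diagonal_apply, ketDiag, offDiagWeight, Prod.mk.injEq, apply_ite star, star_zero,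
    apply_ite Complex.ofReal, Complex.ofReal_zero, RCLike.star_def, Complex.conj_ofReal]
    at hketDiag hweight ⊢
  grind

lemma SchmidtNumberLE.ketDiag_add_offDiagWeight (a : Fin d → ℝ) :
    SchmidtNumberLE d (vecMulVec (ketDiag d a) (star (ketDiag d a)) +
      diagonal fun p => (offDiagWeight a p : ℂ)) 1 := by
  have : NeZero (2 : ZMod 3) := ⟨by decide⟩
  choose ζ hζ using fun i => IsAlgClosed.exists_pow_nat_eq (a i : ℂ) two_pos
  rw [← phaseAverage_eq_vecMulVec_ketDiag_add_diagonal (N := 3) hζ]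
  exact schmidtNumberLE_phaseAverage 3 ζ

lemma SchmidtNumberLE.abs_mul_le_of_ketDiag_add_smul_one {a : Fin d → ℝ} {t : ℝ} (ht : 0 ≤ t)
    (h : SchmidtNumberLE d (vecMulVec (ketDiag d a) (star (ketDiag d a)) +
      t • (1 : Matrix (Fin d × Fin d) (Fin d × Fin d) ℂ)) 1) {i j : Fin d} (hij : i ≠ j) :
    |a i * a j| ≤ t := by
  have hminor : |a i * a j| ^ 2 ≤ t ^ 2 := by
    simpa [hij, hij.symm, ketDiag, vecMulVec_apply, mul_pow, pow_two t] using
      h.norm_sq_apply_le i j i j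
  exact le_of_sq_le_sq hminor ht

lemma SchmidtNumberLE.ketDiag_add_smul_one {a : Fin d → ℝ} {t : ℝ} (ht : 0 ≤ t)
    (h : ∀ i j, i ≠ j → |a i * a j| ≤ t) :
    SchmidtNumberLE d (vecMulVec (ketDiag d a) (star (ketDiag d a)) +
      t • (1 : Matrix (Fin d × Fin d) (Fin d × Fin d) ℂ)) 1 := by
  have hnonneg (p : Fin d × Fin d) : 0 ≤ t - offDiagWeight a p := by
    unfold offDiagWeight
    split_ifs with hp
    · rwa [sub_zero]
    · exact sub_nonneg.2 (h _ _ hp)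
  have hsplit : t • (1 : Matrix (Fin d × Fin d) (Fin d × Fin d) ℂ) =
      diagonal (fun p => (offDiagWeight a p : ℂ)) +
        diagonal (fun p => ((t - offDiagWeight a p : ℝ) : ℂ)) := by
    rw [diagonal_add, ← diagonal_one, ← diagonal_smul]
    congr with p
    simp
  rw [hsplit, ← add_assoc]
  exact (ketDiag_add_offDiagWeight a).add (.diagonal_ofReal hnonneg)

theorem random_robustness_pure_state_general (a : Fin d → ℝ) {t : ℝ} (ht : 0 ≤ t) :
    SchmidtNumberLE d (vecMulVec (ketDiag d a) (star (ketDiag d a)) +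
      t • (1 : Matrix (Fin d × Fin d) (Fin d × Fin d) ℂ)) 1 ↔
      ∀ i j, i ≠ j → |a i * a j| ≤ t :=
  ⟨fun h _ _ hij => h.abs_mul_le_of_ketDiag_add_smul_one ht hij,
    .ketDiag_add_smul_one ht⟩

end DiagonalVectors

lemma abs_mul_le_of_antitone {ι R : Type*} [LinearOrder ι] [CommRing R] [LinearOrder R]
    [IsOrderedRing R] {a : ι → R} (ha : ∀ i, 0 ≤ a i) (hanti : Antitone a) {i₀ i₁ : ι}
    (h₀ : IsBot i₀) (h₁ : i₁ ∈ lowerBounds (Set.Ioi i₀)) {i j : ι} (hij : i ≠ j) :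
    |a i * a j| ≤ a i₀ * a i₁ := by
  rw [abs_of_nonneg (mul_nonneg (ha i) (ha j))]
  wlog hlt : i < j generalizing i j
  · exact mul_comm (a i) (a j) ▸ this hij.symm (lt_of_le_of_ne (not_lt.1 hlt) hij.symm)
  · exact mul_le_mul (hanti (h₀ i)) (hanti (h₁ ((h₀ i).trans_lt hlt))) (ha _) (ha _)

/-- Random robustness of a pure state equals `a₁ a₂`. -/
theorem random_robustness_pure_state (d : ℕ) (hd : 2 ≤ d)
    (a : Fin d → ℝ) (ha : ∀ i, 0 ≤ a i)
    (hord : ∀ i j : Fin d, i ≤ j → a j ≤ a i) (hnorm : ∑ i, a i ^ 2 = 1) :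
    SchmidtNumberLE d
      (Matrix.vecMulVec (ketDiag d a) (star (ketDiag d a)) +
        (a ⟨0, by omega⟩ * a ⟨1, by omega⟩) •
          (1 : Matrix (Fin d × Fin d) (Fin d × Fin d) ℂ)) 1 ∧
    ∀ t : ℝ, 0 ≤ t →
      SchmidtNumberLE d
        (Matrix.vecMulVec (ketDiag d a) (star (ketDiag d a)) +
          t • (1 : Matrix (Fin d × Fin d) (Fin d × Fin d) ℂ)) 1 →
      a ⟨0, by omega⟩ * a ⟨1, by omega⟩ ≤ t := by
  exact ⟨(random_robustness_pure_state_general a (mul_nonneg (ha _) (ha _))).2 fun _ _ hij =>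
      abs_mul_le_of_antitone ha hord (fun _ => Nat.zero_le _) (fun _ hpos => hpos) hij,
    fun t ht h => (le_abs_self _).trans
      ((random_robustness_pure_state_general a ht).1 h _ _ (by simp))⟩
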